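/- Let T' = (t'_k) and T⋆ = (t⋆_k) be admissible event sequences, let q be the composed index function, and let the sequences (θ_l), (ψ_l), (λ_l) be as defined. Then for every l ∈ ℕ and every t ∈ [ψ_l, ψ_{l+1}), the held sample time satisfies t'_{q(t)} = λ_l; consequently, for measurable v : [0,∞) → ℝ, the asynchronous sample-and-hold perturbation satisfies (Δv)(t) = ∫_{λ_l}^{t} v(x) dx for t ∈ [ψ_l, ψ_{l+1}). -/

import Mathlib

/-!
Let `s` be the last hold update at or before `t`. Since `ψ_l` is itself a hold update, `ψ_l ≤ s`.
No sample lies in `(ψ_l, s]`: if one did, the first sample after `ψ_l`, namely `θ_{2l+1}`, would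
be at most `s`, so `s` would be a hold update at or after `θ_{2l+1}`, giving `ψ_{l+1} ≤ s ≤ t`.
Hence the same samples precede `s` and `ψ_l`, and the last one is the same.
-/

open MeasureTheory Filter Set

/-- An admissible event sequence: `T 0 = 0`, strictly increasing, tending to `+∞`. -/
def Admissible (T : ℕ → ℝ) : Prop :=
  T 0 = 0 ∧ (∀ k, T k < T (k + 1)) ∧ Tendsto T atTop atTop

/-- `lastIdx T t = max {k | T k ≤ t}`. -/
noncomputable def lastIdx (T : ℕ → ℝ) (t : ℝ) : ℕ := sSup {k | T k ≤ t}

/-- `q(t) = p(t⋆_{n(t)})`: index of the sample held at the most recent hold update. -/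
noncomputable def qIdx (Tp Ts : ℕ → ℝ) (t : ℝ) : ℕ := lastIdx Tp (Ts (lastIdx Ts t))

/-- `φ_k = min {t⋆_j | t⋆_j ≥ t'_k}`, the first hold update at or after sample `k`. -/
noncomputable def phi (Tp Ts : ℕ → ℝ) (k : ℕ) : ℝ := Ts (sInf {j | Tp k ≤ Ts j})

/-- The asynchrony bounds (3) on the sample sequence `Tp = T'` and update sequence
`Ts = T⋆`, with parameters `τ' > 0`, `τ⋆ > 0`, `τ° ∈ [0,τ⋆]`, `τ♮ ∈ [0, min τ° τ']`. -/
def AsyncBounds (Tp Ts : ℕ → ℝ) (τp τs τc τn : ℝ) : Prop :=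
  0 < τp ∧ 0 < τs ∧ 0 ≤ τc ∧ τc ≤ τs ∧ 0 ≤ τn ∧ τn ≤ min τc τp ∧
  (∀ k, Tp (k + 1) - Tp k ≤ τp) ∧
  (∀ k, Ts (k + 1) - Ts k ≤ τs) ∧
  (∀ k, phi Tp Ts k - Tp k ≤ τc) ∧
  (∀ k, phi Tp Ts k - Tp (lastIdx Tp (phi Tp Ts k)) ≤ τn)

/-- The asynchronous sample-and-hold perturbation `(Δ v)(t) = ∫_{t'_{q(t)}}^{t} v(x) dx`. -/
noncomputable def Delta (Tp Ts : ℕ → ℝ) (v : ℝ → ℝ) (t : ℝ) : ℝ :=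
  ∫ x in (Tp (qIdx Tp Ts t))..t, v x

/-- The alternating event times: `θ_0 = 0`; `θ_{l+1} = min {t'_k | t'_k > θ_l}` for `l` even
and `θ_{l+1} = min {t⋆_k | t⋆_k ≥ θ_l}` for `l` odd (using that the sequences are strictly
increasing, the minimum value is attained at the least index). -/
noncomputable def theta (Tp Ts : ℕ → ℝ) : ℕ → ℝ
  | 0 => 0
  | l + 1 =>
      if l % 2 = 0 then Tp (sInf {k | theta Tp Ts l < Tp k})
      else Ts (sInf {k | theta Tp Ts l ≤ Ts k})

/-- `ψ_l = θ_{2l}`. -/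
noncomputable def psiSeq (Tp Ts : ℕ → ℝ) (l : ℕ) : ℝ := theta Tp Ts (2 * l)

/-- `λ_l = max {t'_k | t'_k ≤ ψ_l}`. -/
noncomputable def lamSeq (Tp Ts : ℕ → ℝ) (l : ℕ) : ℝ := Tp (lastIdx Tp (psiSeq Tp Ts l))

lemma Admissible.strictMono {T : ℕ → ℝ} (h : Admissible T) : StrictMono T :=
  strictMono_nat_of_lt_succ h.2.1

lemma Admissible.bddAbove {T : ℕ → ℝ} (h : Admissible T) (t : ℝ) : BddAbove {k | T k ≤ t} := by
  obtain ⟨N, hN⟩ := (h.2.2.eventually_gt_atTop t).exists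
  refine ⟨N, fun k hk => ?_⟩
  exact (h.strictMono.lt_iff_lt.1 (lt_of_le_of_lt hk hN)).le

lemma Admissible.lastIdx_le {T : ℕ → ℝ} (h : Admissible T) {t : ℝ} {k : ℕ} (hk : T k ≤ t) :
    T (lastIdx T t) ≤ t :=
  Nat.sSup_mem (s := {k | T k ≤ t}) ⟨k, hk⟩ (h.bddAbove t)

lemma Admissible.le_lastIdx {T : ℕ → ℝ} (h : Admissible T) {t : ℝ} {k : ℕ} (hk : T k ≤ t) :
    T k ≤ T (lastIdx T t) :=
  h.strictMono.monotone (le_csSup (h.bddAbove t) hk)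

lemma psiSeq_succ (Tp Ts : ℕ → ℝ) (l : ℕ) :
    psiSeq Tp Ts (l + 1) =
      Ts (sInf {j | Tp (sInf {k | psiSeq Tp Ts l < Tp k}) ≤ Ts j}) := by
  have h1 : theta Tp Ts (2 * l + 1) = Tp (sInf {k | psiSeq Tp Ts l < Tp k}) := by
    rw [theta, if_pos (by omega)]
    rfl
  rw [← h1]
  change theta Tp Ts (2 * l + 1 + 1) = _
  rw [theta, if_neg (by omega)]

lemma psiSeq_mem_range (Tp : ℕ → ℝ) {Ts : ℕ → ℝ} (hTs : Admissible Ts) (l : ℕ) :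
    ∃ j, Ts j = psiSeq Tp Ts l := by
  cases l with
  | zero => exact ⟨0, by simp [psiSeq, theta, hTs.1]⟩
  | succ l => exact ⟨_, (psiSeq_succ Tp Ts l).symm⟩

/-- If a sample lies after `ψ_l`, every hold update at or after that sample is at or after
`ψ_{l+1}`. -/
lemma psiSeq_succ_le {Tp Ts : ℕ → ℝ} (hTp : Admissible Tp) (hTs : Admissible Ts) {l k j : ℕ}
    (hk : psiSeq Tp Ts l < Tp k) (hkj : Tp k ≤ Ts j) : psiSeq Tp Ts (l + 1) ≤ Ts j := by
  rw [psiSeq_succ]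
  refine hTs.strictMono.monotone (Nat.sInf_le ?_)
  exact (hTp.strictMono.monotone (Nat.sInf_le hk)).trans hkj

/-- On `[ψ_l, ψ_{l+1})` the held sample time is `λ_l`:
`t'_{q(t)} = λ_l`, and hence `(Δv)(t) = ∫_{λ_l}^t v(x) dx`. -/
theorem stmt13 (Tp Ts : ℕ → ℝ) (hTp : Admissible Tp) (hTs : Admissible Ts)
    (v : ℝ → ℝ) (hv : Measurable v)
    (l : ℕ) (t : ℝ) (htl : t ∈ Set.Ico (psiSeq Tp Ts l) (psiSeq Tp Ts (l + 1))) :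
    Tp (qIdx Tp Ts t) = lamSeq Tp Ts l ∧
    Delta Tp Ts v t = ∫ x in (lamSeq Tp Ts l)..t, v x := by
  have key : Tp (qIdx Tp Ts t) = lamSeq Tp Ts l := by
    obtain ⟨j, hj⟩ := psiSeq_mem_range Tp hTs l
    have hjt : Ts j ≤ t := hj.trans_le htl.1
    have hs : Ts (lastIdx Ts t) ≤ t := hTs.lastIdx_le hjt
    have hψs : psiSeq Tp Ts l ≤ Ts (lastIdx Ts t) := hj ▸ hTs.le_lastIdx hjt
    have hset : {k | Tp k ≤ Ts (lastIdx Ts t)} = {k | Tp k ≤ psiSeq Tp Ts l} := by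
      ext k
      refine ⟨fun hk => ?_, fun hk => le_trans hk hψs⟩
      by_contra hlt
      exact absurd (psiSeq_succ_le hTp hTs (not_le.1 hlt) hk) (hs.trans_lt htl.2).not_ge
    unfold qIdx lamSeq
    rw [lastIdx, hset, ← lastIdx]
  exact ⟨key, by rw [Delta, key]⟩
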